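/- Let L be a finite lattice, let φ ∈ M_1(L), and let a ∈ L. Then the λ-difference Λ_a φ, defined by Λ_a φ(x) = φ(x) − λ(φ; a, x), is nonnegative and monotone on L, i.e., Λ_a φ ∈ M_1(L). -/

import Mathlib

/-!
The proof works with arbitrary trees instead of paths.

* Pruning (`exists_path_ge`): a leaf `v` with neighbour `u` contributes
  `φ v - φ (u ⊔ v) ≤ 0` to `φ(G)`, so deleting all leaves other than `a` and `b` turns any tree
  containing `a` and `b` into a path from `a` to `b` without decreasing `φ(G)`.
* Grafting (`exists_graft`): attaching a new leaf `x` at a vertex `y` of `G` changes `φ(G)` by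
  `φ x - φ (y ⊔ x)`, which is `φ x - φ y` when `x ≤ y`.
* Upper bound (`phiTree_le`): `φ(G) ≤ φ x` for every vertex `x` of `G`, by sending each
  other vertex `v` to the edge joining it to a neighbour closer to `x`.

The upper bound gives `λ(φ; a, x) ≤ φ x`. For `x ≤ y`, grafting `x` onto a path from `a` to `y`
and pruning gives `λ(φ; a, y) - φ y + φ x ≤ λ(φ; a, x)`.
-/

attribute [local instance 50] Classical.propDecidable

/-- `φ ∈ M_1(L)`: `φ` is nonnegative and monotone. -/
def M1 {L : Type*} [Lattice L] (φ : L → ℝ) : Prop :=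
  (∀ x, 0 ≤ φ x) ∧ Monotone φ

/-- A tree in `𝒯`: a connected acyclic simple graph whose (nonempty) vertex set is a
subset of `L`, given by its vertex finset and edge finset. -/
structure FinTree (L : Type*) [Lattice L] where
  verts : Finset L
  edges : Finset (Sym2 L)
  nonempty : verts.Nonempty
  loopless : ∀ e ∈ edges, ¬ e.IsDiag
  edge_mem : ∀ e ∈ edges, ∀ x ∈ e, x ∈ verts
  connected : ∀ x ∈ verts, ∀ y ∈ verts,
    (SimpleGraph.fromEdgeSet (edges : Set (Sym2 L))).Reachable x y
  acyclic : (SimpleGraph.fromEdgeSet (edges : Set (Sym2 L))).IsAcyclic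

/-- `φ(G) = Σ_{a ∈ G} φ(a) − Σ_{{a,b} ∈ E(G)} φ(a ∨ b)` for a tree `G ∈ 𝒯`. -/
noncomputable def phiTree {L : Type*} [Lattice L] (φ : L → ℝ) (G : FinTree L) : ℝ :=
  (∑ a ∈ G.verts, φ a) -
    ∑ e ∈ G.edges, Sym2.lift ⟨fun a b => φ (a ⊔ b), fun a b => by simp [sup_comm]⟩ e

/-- `H` is a path from `a` to `b`: a tree in `𝒯` whose only leaves are `a` and `b`
(the one-vertex tree `{a}` being a path from `a` to `a`). -/
def IsPathTree {L : Type*} [Lattice L] (H : FinTree L) (a b : L) : Prop :=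
  a ∈ H.verts ∧ b ∈ H.verts ∧
    ∀ x ∈ H.verts, (H.edges.filter (fun e => x ∈ e)).card ≤ 1 → x = a ∨ x = b

/-- `λ(φ; a, b)`: the maximum of `φ(H)` over paths `H` from `a` to `b`. -/
noncomputable def lam {L : Type*} [Lattice L] (φ : L → ℝ) (a b : L) : ℝ :=
  sSup {r : ℝ | ∃ H : FinTree L, IsPathTree H a b ∧ phiTree φ H = r}

/-- The successive λ-difference operator `Λ_{a_1,…,a_n} φ`, with
`Λ_a φ(x) = φ(x) − λ(φ; a, x)` and `Λ_{a_1,…,a_n} φ = Λ_{a_n}(Λ_{a_1,…,a_{n−1}} φ)`. -/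
noncomputable def lamSucc {L : Type*} [Lattice L] (φ : L → ℝ) (l : List L) : L → ℝ :=
  l.foldl (fun ψ a => fun x => ψ x - lam ψ a x) φ

namespace FinTree

variable {L : Type*} [Lattice L]

/-- The simple graph on all of `L` given by the edges of a tree; elements outside the vertex set
are isolated. -/
abbrev graph (G : FinTree L) : SimpleGraph L :=
  SimpleGraph.fromEdgeSet (G.edges : Set (Sym2 L))

/-- The weight `φ (a ⊔ b)` of an edge `{a, b}`. -/
noncomputable abbrev weight (φ : L → ℝ) : Sym2 L → ℝ :=
  Sym2.lift ⟨fun a b => φ (a ⊔ b), fun a b => by simp [sup_comm]⟩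

lemma phiTree_eq (φ : L → ℝ) (G : FinTree L) :
    phiTree φ G = (∑ a ∈ G.verts, φ a) - ∑ e ∈ G.edges, weight φ e := rfl

lemma graph_adj {G : FinTree L} {x y : L} :
    G.graph.Adj x y ↔ s(x, y) ∈ G.edges ∧ x ≠ y := by
  simp [graph]

/-- A vertex other than `x` has a neighbour strictly closer to `x`. -/
lemma exists_closer (G : FinTree L) {x v : L} (hx : x ∈ G.verts) (hv : v ∈ G.verts)
    (hne : v ≠ x) : ∃ p, s(v, p) ∈ G.edges ∧ G.graph.dist p x < G.graph.dist v x := by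
  obtain ⟨w, hw⟩ := (G.connected v hv x hx).exists_walk_length_eq_dist
  cases w with
  | nil => exact absurd rfl hne
  | cons h q =>
    refine ⟨_, (graph_adj.1 h).1, ?_⟩
    have := SimpleGraph.dist_le q
    rw [SimpleGraph.Walk.length_cons] at hw
    exact lt_of_le_of_lt this (by simp [graph, ← hw])

lemma phiTree_le {φ : L → ℝ} (hφ : M1 φ) (G : FinTree L) {x : L} (hx : x ∈ G.verts) :
    phiTree φ G ≤ φ x := by
  have key : ∀ v : L, ∃ p, v ∈ G.verts.erase x →
      s(v, p) ∈ G.edges ∧ G.graph.dist p x < G.graph.dist v x := by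
    intro v
    by_cases hv : v ∈ G.verts.erase x
    · obtain ⟨p, hp⟩ := G.exists_closer hx (Finset.mem_of_mem_erase hv) (Finset.ne_of_mem_erase hv)
      exact ⟨p, fun _ => hp⟩
    · exact ⟨v, fun h => absurd h hv⟩
  choose p hp using key
  have hinj : Set.InjOn (fun v => s(v, p v)) (G.verts.erase x : Finset L) := by
    intro v hv w hw hvw
    have h1 := (hp v hv).2
    have h2 := (hp w hw).2
    rcases Sym2.eq_iff.1 hvw with h | ⟨h, h'⟩
    · exact h.1
      -- here each of `v` and `w` would be strictly closer to `x` than the other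
    · rw [h'] at h1
      rw [← h] at h2
      omega
  have hnn : ∀ e : Sym2 L, 0 ≤ weight φ e := fun e => by
    induction e with | _ a b => exact hφ.1 _
  have h1 : ∑ v ∈ G.verts.erase x, φ v ≤ ∑ e ∈ G.edges, weight φ e := calc
    _ ≤ ∑ v ∈ G.verts.erase x, weight φ s(v, p v) :=
        Finset.sum_le_sum fun v _ => hφ.2 le_sup_left
    _ = ∑ e ∈ (G.verts.erase x).image (fun v => s(v, p v)), weight φ e :=
        (Finset.sum_image hinj).symm
    _ ≤ _ := Finset.sum_le_sum_of_subset_of_nonneg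
        (Finset.image_subset_iff.2 fun v hv => (hp v hv).1) fun e _ _ => hnn e
  rw [phiTree_eq, ← Finset.add_sum_erase _ _ hx]
  linarith

/-- `G'` is `G` with `x` attached as a new leaf at `y`, or `G` itself if `x` is already a vertex. -/
lemma exists_graft {φ : L → ℝ} (hφ : M1 φ) (G : FinTree L) {y : L} (hy : y ∈ G.verts) (x : L) :
    ∃ G' : FinTree L, G.verts ⊆ G'.verts ∧ x ∈ G'.verts ∧
      phiTree φ G + φ x - φ (y ⊔ x) ≤ phiTree φ G' := by
  by_cases hx : x ∈ G.verts
  · refine ⟨G, subset_rfl, hx, ?_⟩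
    have := hφ.2 (le_sup_right : x ≤ y ⊔ x)
    linarith
  have hyx : y ≠ x := fun h => hx (h ▸ hy)
  have hxe : ∀ e ∈ G.edges, x ∉ e := fun e he h => hx (G.edge_mem e he x h)
  have hgraph : SimpleGraph.fromEdgeSet ((insert s(y, x) G.edges : Finset (Sym2 L)) : Set (Sym2 L))
      = G.graph ⊔ SimpleGraph.edge y x := by
    ext u v
    simp only [SimpleGraph.fromEdgeSet_adj, SimpleGraph.sup_adj, SimpleGraph.edge_adj,
      Finset.coe_insert, Set.mem_insert_iff, Sym2.eq_iff, graph]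
    tauto
  have hadj : (G.graph ⊔ SimpleGraph.edge y x).Adj y x := by
    simp [SimpleGraph.edge_adj, hyx]
  have hreach : ∀ u ∈ insert x G.verts, (G.graph ⊔ SimpleGraph.edge y x).Reachable u y := by
    intro u hu
    rcases Finset.mem_insert.1 hu with rfl | hu
    · exact hadj.reachable.symm
    · exact (G.connected u hu y hy).mono le_sup_left
  refine ⟨⟨insert x G.verts, insert s(y, x) G.edges, ⟨x, by simp⟩, ?_, ?_, ?_, ?_⟩,
    Finset.subset_insert _ _, Finset.mem_insert_self _ _, ?_⟩
  · intro e he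
    rcases Finset.mem_insert.1 he with rfl | he
    · simpa using hyx
    · exact G.loopless e he
  · intro e he u hu
    rcases Finset.mem_insert.1 he with rfl | he
    · rcases Sym2.mem_iff.1 hu with rfl | rfl <;> simp [hy]
    · exact Finset.mem_insert_of_mem (G.edge_mem e he u hu)
  · intro u hu v hv
    rw [hgraph]
    exact (hreach u hu).trans (hreach v hv).symm
  · rw [hgraph]
    have hnr : ¬ G.graph.Reachable y x := by
      rintro h
      obtain ⟨w⟩ := h.symm
      cases w with
      | nil => exact hyx rfl
      | cons h q => exact hxe _ (graph_adj.1 h).1 (by simp)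
    exact G.acyclic.sup_edge_of_not_reachable hnr
  · rw [phiTree_eq, phiTree_eq]
    dsimp only
    rw [Finset.sum_insert hx, Finset.sum_insert fun h => hxe _ h (by simp)]
    simp only [Sym2.lift_mk]
    linarith

/-- Deleting a leaf `v` does not decrease `φ(G)`. A second vertex `a` excludes the one-vertex
tree. -/
lemma exists_erase {φ : L → ℝ} (hφ : M1 φ) (G : FinTree L) {v a : L} (hv : v ∈ G.verts)
    (ha : a ∈ G.verts) (hva : v ≠ a) (hdeg : (G.edges.filter (fun e => v ∈ e)).card ≤ 1) :
    ∃ G' : FinTree L, G'.verts = G.verts.erase v ∧ phiTree φ G ≤ phiTree φ G' := by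
  obtain ⟨u, hu, -⟩ := G.exists_closer ha hv hva
  have huniq : ∀ e ∈ G.edges, v ∈ e → e = s(v, u) := fun e he h =>
    Finset.card_le_one.1 hdeg e (by simp [he, h]) _ (by simp [hu])
  have hfilter : G.edges.filter (fun e => v ∉ e) = G.edges.erase s(v, u) := by
    ext e
    simp only [Finset.mem_filter, Finset.mem_erase]
    constructor
    · rintro ⟨he, h⟩
      exact ⟨by rintro rfl; simp at h, he⟩
    · rintro ⟨h, he⟩
      exact ⟨he, fun h' => h (huniq e he h')⟩
  set E := G.edges.filter (fun e => v ∉ e) with hE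
  -- the retraction of `G` onto `G - v`, sending `v` to its unique neighbour
  let f : L → L := fun x => if x = v then u else x
  have hstep : ∀ x y, G.graph.Reachable x y →
      (SimpleGraph.fromEdgeSet (E : Set (Sym2 L))).Reachable (f x) (f y) := by
    rintro x y ⟨w⟩
    induction w with
    | nil => rfl
    | @cons x z y h q ih =>
      refine SimpleGraph.Reachable.trans ?_ ih
      obtain ⟨hmem, hne⟩ := graph_adj.1 h
      by_cases hxv : x = v
      · subst hxv
        have := huniq _ hmem (by simp)
        have hz : z = u := Sym2.congr_right.1 this
        simp [f, hz]
      · by_cases hzv : z = v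
        · subst hzv
          have := huniq _ hmem (by simp)
          have hz : x = u := Sym2.congr_right.1 (Sym2.eq_swap.trans this)
          simp [f, hz]
        · refine SimpleGraph.Adj.reachable ?_
          simp [f, hxv, hzv, hE, hmem, hne, Ne.symm hxv, Ne.symm hzv]
  refine ⟨⟨G.verts.erase v, E, ⟨a, by simp [ha, hva.symm]⟩, ?_, ?_, ?_, ?_⟩, rfl, ?_⟩
  · exact fun e he => G.loopless e (Finset.mem_of_mem_filter e he)
  · intro e he x hx
    obtain ⟨he, h⟩ := Finset.mem_filter.1 he
    exact Finset.mem_erase.2 ⟨fun h' => h (h' ▸ hx), G.edge_mem e he x hx⟩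
  · intro x hx y hy
    obtain ⟨hxv, hx⟩ := Finset.mem_erase.1 hx
    obtain ⟨hyv, hy⟩ := Finset.mem_erase.1 hy
    simpa [f, hxv, hyv] using hstep x y (G.connected x hx y hy)
  · refine G.acyclic.anti (SimpleGraph.fromEdgeSet_mono ?_)
    exact_mod_cast Finset.filter_subset _ _
  · rw [phiTree_eq, phiTree_eq]
    dsimp only
    rw [hfilter, ← Finset.add_sum_erase _ _ hv, ← Finset.add_sum_erase _ _ hu]
    simp only [Sym2.lift_mk]
    have := hφ.2 (le_sup_left : v ≤ v ⊔ u)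
    linarith

lemma exists_path_ge {φ : L → ℝ} (hφ : M1 φ) {a b : L} (n : ℕ) (G : FinTree L)
    (hn : G.verts.card = n) (ha : a ∈ G.verts) (hb : b ∈ G.verts) :
    ∃ H : FinTree L, IsPathTree H a b ∧ phiTree φ G ≤ phiTree φ H := by
  induction n generalizing G with
  | zero => simp [Finset.card_eq_zero.1 hn] at ha
  | succ n ih =>
    by_cases h : IsPathTree G a b
    · exact ⟨G, h, le_rfl⟩
    · obtain ⟨v, hv, hdeg, hva, hvb⟩ : ∃ v ∈ G.verts,
          (G.edges.filter (fun e => v ∈ e)).card ≤ 1 ∧ v ≠ a ∧ v ≠ b := by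
        by_contra hcon
        push Not at hcon
        exact h ⟨ha, hb, fun x hx hd => or_iff_not_imp_left.2 (hcon x hx hd)⟩
      obtain ⟨G', hG', hle⟩ := G.exists_erase hφ hv ha hva hdeg
      obtain ⟨H, hH, hle'⟩ := ih G' (by rw [hG', Finset.card_erase_of_mem hv, hn]; rfl)
        (by simp [hG', ha, hva.symm]) (by simp [hG', hb, hvb.symm])
      exact ⟨H, hH, hle.trans hle'⟩

/-- The one-vertex tree. -/
def single (a : L) : FinTree L where
  verts := {a}
  edges := ∅
  nonempty := by simp
  loopless := by simp
  edge_mem := by simp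
  connected := by simp
  acyclic := by simp

end FinTree

open FinTree in
lemma exists_pathTree {L : Type*} [Lattice L] {φ : L → ℝ} (hφ : M1 φ) (a x : L) :
    ∃ H : FinTree L, IsPathTree H a x := by
  obtain ⟨G, hG, hx, -⟩ := (single a).exists_graft hφ (Finset.mem_singleton_self a) x
  obtain ⟨H, hH, -⟩ := G.exists_path_ge hφ _ rfl (hG (Finset.mem_singleton_self a)) hx
  exact ⟨H, hH⟩

lemma le_lam {L : Type*} [Lattice L] {φ : L → ℝ} (hφ : M1 φ) {a x : L} {H : FinTree L}
    (hH : IsPathTree H a x) : phiTree φ H ≤ lam φ a x := by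
  refine le_csSup ⟨φ x, ?_⟩ ⟨H, hH, rfl⟩
  rintro r ⟨K, hK, rfl⟩
  exact K.phiTree_le hφ hK.2.1

lemma lam_le {L : Type*} [Lattice L] {φ : L → ℝ} (hφ : M1 φ) {a x : L} {c : ℝ}
    (h : ∀ H : FinTree L, IsPathTree H a x → phiTree φ H ≤ c) : lam φ a x ≤ c := by
  obtain ⟨H, hH⟩ := exists_pathTree hφ a x
  refine csSup_le ⟨_, H, hH, rfl⟩ ?_
  rintro r ⟨K, hK, rfl⟩
  exact h K hK

/-- If `φ ∈ M_1(L)` then the λ-difference `Λ_a φ(x) = φ(x) − λ(φ; a, x)`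
belongs to `M_1(L)`. -/
theorem stmt_11 {L : Type*} [Lattice L] [Fintype L] [BoundedOrder L]
    (φ : L → ℝ) (hφ : M1 φ) (a : L) :
    M1 (fun x => φ x - lam φ a x) := by
  refine ⟨fun x => sub_nonneg.2 (lam_le hφ fun H hH => H.phiTree_le hφ hH.2.1), fun x y hxy => ?_⟩
  have key : lam φ a y ≤ lam φ a x + φ y - φ x := lam_le hφ fun H hH => by
    obtain ⟨G, hsub, hx, hG⟩ := H.exists_graft hφ hH.2.1 x
    obtain ⟨K, hK, hGK⟩ := G.exists_path_ge hφ _ rfl (hsub hH.1) hx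
    have := le_lam hφ hK
    rw [sup_eq_left.2 hxy] at hG
    linarith
  show φ x - lam φ a x ≤ φ y - lam φ a y
  linarith
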